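/- Let 0 < α < 1. Then the second-order global Padé approximant of Zeng and Chen for E_{α,α}(−x), namely R^{3,2}_{α,α}(x) = α / (Γ(1+α) + (2 Γ(1−α)² / Γ(1−2α)) x + Γ(1−α) x²), satisfies E_{α,α}(−x) − R^{3,2}_{α,α}(x) = O(x^{−4}) as x → ∞; that is, there exist C, R > 0 such that |E_{α,α}(−x) − R^{3,2}_{α,α}(x)| ≤ C x^{−4} for all x > R. (For α = 1/2 the middle coefficient is interpreted as 0, consistent with Γ(0) = 0 in Mathlib's convention so that division yields 0.) -/

import Mathlib

/-!
For every complex `s`, Hankel's formula represents `1 / Γ(s)` as the integral of `e^z z^{-s}` over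
a contour that winds around the negative axis. Summing it against the geometric series represents
`E_{α,β}(-x)` by the kernel `e^z z^{α-β} / (z^α + x)` on a contour of large radius. For `0 < α < 1`
the denominator does not vanish on the cut plane, and is at least `x sin (πα)` there, so the
contour can be shrunk to a fixed one and `E_{α,β}(-x) = O(1/x)` for *every* `β`. The recurrence
`E_{α,β}(-x) = x⁻¹ (1 / Γ(β-α) - E_{α,β-α}(-x))` gains one power of `1/x` at each use and
bootstraps this bound to the complete asymptotic expansion. At `β = α` its first coefficient
`1 / Γ(0)` vanishes, and the next two are those of the rational approximant, because
`1 / Γ(-s) = -s / Γ(1-s)`.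
-/

noncomputable section

open Complex Filter MeasureTheory Set Asymptotics
open scoped Real Topology

/-- The closed strip `|Im w| ≤ π`. Hankel contours are described in the logarithmic coordinate `w`,
`z = e^w`, in which the two sides of the cut along the negative `z`-axis are the two edges. -/
def hankelStrip : Set ℂ := {w | |w.im| ≤ π}

/-- The jump of `g` across the cut: its value at the point of real part `u` on the upper edge of the
strip minus that on the lower edge. -/
def hankelJump (g : ℂ → ℂ) (u : ℝ) : ℂ := g (u + π * I) - g (u - π * I)

/-- The integral of `g`, with the factor `(2πi)⁻¹`, over the Hankel contour of radius `e^c`: in from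
infinity along the lower edge to real part `c`, up the vertical segment, and back to infinity along
the upper edge. Both edges enter through one integral of the jump. -/
def hankelIntegral (c : ℝ) (g : ℂ → ℂ) : ℂ :=
  (2 * π * I)⁻¹ * (I * (∫ θ in (-π)..π, g (c + θ * I)) + ∫ u in Ioi c, hankelJump g u)

/-- Integrability of `g` along each of the three pieces of the Hankel contour of radius `e^c`. -/
structure HankelIntegrable (c : ℝ) (g : ℂ → ℂ) : Prop where
  arc : IntervalIntegrable (fun θ : ℝ => g (c + θ * I)) volume (-π) π
  upper : IntegrableOn (fun u : ℝ => g (u + π * I)) (Ioi c)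
  lower : IntegrableOn (fun u : ℝ => g (u - π * I)) (Ioi c)

section Contour

variable {c d : ℝ} {f g h : ℂ → ℂ}

lemma upper_edge_mem_hankelStrip (u : ℝ) : (u + π * I : ℂ) ∈ hankelStrip := by
  simp [hankelStrip, abs_of_pos Real.pi_pos]

lemma lower_edge_mem_hankelStrip (u : ℝ) : (u - π * I : ℂ) ∈ hankelStrip := by
  simp [hankelStrip, abs_of_pos Real.pi_pos]

lemma arc_mem_hankelStrip (c : ℝ) {θ : ℝ} (hθ : θ ∈ uIcc (-π) π) :
    (c + θ * I : ℂ) ∈ hankelStrip := by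
  rw [uIcc_of_le (by linarith [Real.pi_pos])] at hθ
  simpa [hankelStrip, abs_le] using hθ

lemma HankelIntegrable.integrableOn_hankelJump (hg : HankelIntegrable c g) :
    IntegrableOn (hankelJump g) (Ioi c) :=
  hg.upper.sub hg.lower

lemma HankelIntegrable.const_mul (hg : HankelIntegrable c g) (a : ℂ) :
    HankelIntegrable c fun w => a * g w :=
  ⟨hg.arc.const_mul a, hg.upper.const_mul a, hg.lower.const_mul a⟩

lemma HankelIntegrable.add (hf : HankelIntegrable c f) (hg : HankelIntegrable c g) :
    HankelIntegrable c fun w => f w + g w :=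
  ⟨hf.arc.add hg.arc, hf.upper.add hg.upper, hf.lower.add hg.lower⟩

lemma HankelIntegrable.mono {K : ℝ} (hh : HankelIntegrable c h)
    (hg : ContinuousOn g hankelStrip) (hgh : ∀ w ∈ hankelStrip, ‖g w‖ ≤ K * ‖h w‖) :
    HankelIntegrable c g where
  arc := ContinuousOn.intervalIntegrable <|
    hg.comp (by fun_prop) fun _ hθ => arc_mem_hankelStrip c hθ
  upper := by
    refine Integrable.mono' (hh.upper.norm.const_mul K) ?_
      (.of_forall fun u => hgh _ (upper_edge_mem_hankelStrip u))
    exact (hg.comp_continuous (by fun_prop) upper_edge_mem_hankelStrip).aestronglyMeasurable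
  lower := by
    refine Integrable.mono' (hh.lower.norm.const_mul K) ?_
      (.of_forall fun u => hgh _ (lower_edge_mem_hankelStrip u))
    exact (hg.comp_continuous (by fun_prop) lower_edge_mem_hankelStrip).aestronglyMeasurable

lemma hankelIntegral_const_mul (c : ℝ) (a : ℂ) (g : ℂ → ℂ) :
    hankelIntegral c (fun w => a * g w) = a * hankelIntegral c g := by
  simp only [hankelIntegral, hankelJump, ← mul_sub, integral_const_mul,
    intervalIntegral.integral_const_mul]
  ring

lemma hankelIntegral_add (hf : HankelIntegrable c f) (hg : HankelIntegrable c g) :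
    hankelIntegral c (fun w => f w + g w) = hankelIntegral c f + hankelIntegral c g := by
  have hjump : hankelJump (fun w => f w + g w) = fun u => hankelJump f u + hankelJump g u := by
    funext u; simp only [hankelJump]; ring
  simp only [hankelIntegral, hjump, intervalIntegral.integral_add hf.arc hg.arc,
    integral_add hf.integrableOn_hankelJump hg.integrableOn_hankelJump]
  ring

lemma norm_hankelJump_le (g : ℂ → ℂ) (u : ℝ) :
    ‖hankelJump g u‖ ≤ ‖g (u + π * I)‖ + ‖g (u - π * I)‖ :=
  norm_sub_le _ _

lemma exists_norm_hankelIntegral_le (hh : HankelIntegrable c h) :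
    ∃ B : ℝ, ∀ (g : ℂ → ℂ) (K : ℝ), (∀ w ∈ hankelStrip, ‖g w‖ ≤ K * ‖h w‖) →
      ‖hankelIntegral c g‖ ≤ K * B := by
  refine ⟨‖(2 * π * I : ℂ)⁻¹‖ * ((∫ θ in (-π)..π, ‖h (c + θ * I)‖) +
    ∫ u in Ioi c, (‖h (u + π * I)‖ + ‖h (u - π * I)‖)), fun g K hgh => ?_⟩
  have hpi : -π ≤ π := by linarith [Real.pi_pos]
  have harc : ‖∫ θ in (-π)..π, g (c + θ * I)‖ ≤ K * ∫ θ in (-π)..π, ‖h (c + θ * I)‖ := by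
    rw [← intervalIntegral.integral_const_mul]
    refine intervalIntegral.norm_integral_le_of_norm_le hpi (.of_forall fun θ hθ => ?_)
      (hh.arc.norm.const_mul K)
    exact hgh _ (arc_mem_hankelStrip c (uIcc_of_le hpi ▸ Ioc_subset_Icc_self hθ))
  have hjump : ‖∫ u in Ioi c, hankelJump g u‖ ≤
      K * ∫ u in Ioi c, (‖h (u + π * I)‖ + ‖h (u - π * I)‖) := by
    rw [← integral_const_mul]
    refine norm_integral_le_of_norm_le ((hh.upper.norm.add hh.lower.norm).const_mul K)
      (.of_forall fun u => ?_)
    rw [mul_add]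
    exact (norm_hankelJump_le g u).trans <| add_le_add
      (hgh _ (upper_edge_mem_hankelStrip u)) (hgh _ (lower_edge_mem_hankelStrip u))
  calc ‖hankelIntegral c g‖
      ≤ ‖(2 * π * I : ℂ)⁻¹‖ *
        (‖∫ θ in (-π)..π, g (c + θ * I)‖ + ‖∫ u in Ioi c, hankelJump g u‖) := by
        rw [hankelIntegral, norm_mul]
        gcongr
        refine (norm_add_le _ _).trans_eq ?_
        rw [norm_mul, norm_I, one_mul]
    _ ≤ ‖(2 * π * I : ℂ)⁻¹‖ * (K * (∫ θ in (-π)..π, ‖h (c + θ * I)‖) +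
        K * ∫ u in Ioi c, (‖h (u + π * I)‖ + ‖h (u - π * I)‖)) := by gcongr
    _ = _ := by ring

lemma hasSum_hankelIntegral {F : ℕ → ℂ → ℂ} {b : ℕ → ℝ}
    (hF : ∀ k, HankelIntegrable c (F k)) (hh : HankelIntegrable c h) (hb : Summable b)
    (hFh : ∀ k, ∀ w ∈ hankelStrip, c ≤ w.re → ‖F k w‖ ≤ b k * ‖h w‖)
    (hFg : ∀ w ∈ hankelStrip, c ≤ w.re → HasSum (F · w) (g w)) :
    HasSum (fun k => hankelIntegral c (F k)) (hankelIntegral c g) := by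
  have hmem {θ : ℝ} (hθ : θ ∈ uIoc (-π) π) := arc_mem_hankelStrip c (uIoc_subset_uIcc hθ)
  have harc : HasSum (fun k => ∫ θ in (-π)..π, F k (c + θ * I))
      (∫ θ in (-π)..π, g (c + θ * I)) := by
    refine intervalIntegral.hasSum_integral_of_dominated_convergence
      (fun k (θ : ℝ) => b k * ‖h (c + θ * I)‖)
      (fun k => (hF k).arc.aestronglyMeasurable_restrict_uIoc)
      (fun k => .of_forall fun θ hθ => hFh k _ (hmem hθ) (by simp))
      (.of_forall fun θ _ => hb.mul_right _) ?_
      (.of_forall fun θ hθ => hFg _ (hmem hθ) (by simp))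
    simp_rw [tsum_mul_right]
    exact hh.arc.norm.const_mul _
  have hjump : HasSum (fun k => ∫ u in Ioi c, hankelJump (F k) u)
      (∫ u in Ioi c, hankelJump g u) := by
    refine hasSum_integral_of_dominated_convergence
      (fun k (u : ℝ) => b k * (‖h (u + π * I)‖ + ‖h (u - π * I)‖))
      (fun k => (hF k).integrableOn_hankelJump.aestronglyMeasurable)
      (fun k => ae_restrict_of_forall_mem measurableSet_Ioi fun u (hu : c < u) => ?_)
      (.of_forall fun u => hb.mul_right _) ?_
      (ae_restrict_of_forall_mem measurableSet_Ioi fun u (hu : c < u) =>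
        (hFg _ (upper_edge_mem_hankelStrip u) (by simpa using hu.le)).sub
          (hFg _ (lower_edge_mem_hankelStrip u) (by simpa using hu.le)))
    · rw [mul_add]
      exact (norm_hankelJump_le (F k) u).trans <| add_le_add
        (hFh k _ (upper_edge_mem_hankelStrip u) (by simpa using hu.le))
        (hFh k _ (lower_edge_mem_hankelStrip u) (by simpa using hu.le))
    · simp_rw [tsum_mul_right]
      exact (hh.upper.norm.add hh.lower.norm).const_mul _
  exact ((harc.mul_left I).add hjump).mul_left _

lemma hankelIntegral_eq_of_le (hg : DifferentiableOn ℂ g hankelStrip)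
    (hi : HankelIntegrable c g) (hcd : c ≤ d) : hankelIntegral c g = hankelIntegral d g := by
  have hrect := integral_boundary_rect_eq_zero_of_differentiableOn g
    (c - π * I) (d + π * I) (hg.mono fun w hw => by
      have him := (mem_reProdIm.1 hw).2
      simpa [hankelStrip, abs_le, uIcc_of_le (by linarith [Real.pi_pos] : -π ≤ π)] using him)
  simp only [sub_im, add_im, ofReal_im, mul_im, add_re, sub_re, mul_re, ofReal_re, I_im, I_re,
    mul_zero, mul_one, sub_zero, add_zero, zero_add, zero_sub, smul_eq_mul, ofReal_neg, neg_mul,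
    ← sub_eq_add_neg] at hrect
  have hsplit : ∫ u in Ioi c, hankelJump g u =
      (∫ u in c..d, hankelJump g u) + ∫ u in Ioi d, hankelJump g u := by
    rw [intervalIntegral.integral_of_le hcd, ← setIntegral_union (Ioc_disjoint_Ioi le_rfl)
      measurableSet_Ioi (hi.integrableOn_hankelJump.mono_set Ioc_subset_Ioi_self)
      (hi.integrableOn_hankelJump.mono_set (Ioi_subset_Ioi hcd)), Ioc_union_Ioi_eq_Ioi hcd]
  have hedges : ∫ u in c..d, hankelJump g u =
      (∫ u in c..d, g (u + π * I)) - ∫ u in c..d, g (u - π * I) :=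
    intervalIntegral.integral_sub
      ((intervalIntegrable_iff_integrableOn_Ioc_of_le hcd).2
        (hi.upper.mono_set Ioc_subset_Ioi_self))
      ((intervalIntegrable_iff_integrableOn_Ioc_of_le hcd).2
        (hi.lower.mono_set Ioc_subset_Ioi_self))
  rw [hankelIntegral, hankelIntegral, hsplit, hedges]
  linear_combination -(2 * π * I)⁻¹ * hrect

lemma hankelIntegral_eq_zero_of_hasDerivAt
    (hderiv : ∀ w ∈ hankelStrip, HasDerivAt f (g w) w)
    (hf : HankelIntegrable c f) (hg : HankelIntegrable c g) : hankelIntegral c g = 0 := by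
  have harc : ∫ θ in (-π)..π, g (c + θ * I) * I = f (c + π * I) - f (c - π * I) := by
    rw [intervalIntegral.integral_eq_sub_of_hasDerivAt
      (f := fun θ : ℝ => f (c + θ * I)) (fun θ hθ => ?_) (hg.arc.mul_const I)]
    · simp [sub_eq_add_neg]
    · have hline : HasDerivAt (fun z : ℂ => c + z * I) I θ := by
        simpa using ((hasDerivAt_id (θ : ℂ)).mul_const I).const_add (c : ℂ)
      exact ((hderiv _ (arc_mem_hankelStrip c hθ)).comp (θ : ℂ) hline).comp_ofReal
  have hjump_deriv (u : ℝ) : HasDerivAt (hankelJump f) (hankelJump g u) u := by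
    have hu : HasDerivAt (fun z => f (z + π * I)) _ _ :=
      (hderiv _ (upper_edge_mem_hankelStrip u)).comp_add_const _ _
    have hl : HasDerivAt (fun z => f (z - π * I)) _ _ :=
      (hderiv _ (lower_edge_mem_hankelStrip u)).comp_sub_const _ _
    exact hu.comp_ofReal.sub hl.comp_ofReal
  have hjump : ∫ u in Ioi c, hankelJump g u = 0 - hankelJump f c :=
    integral_Ioi_of_hasDerivAt_of_tendsto' (fun u _ => hjump_deriv u)
      hg.integrableOn_hankelJump (tendsto_zero_of_hasDerivAt_of_integrableOn_Ioi
        (fun u _ => hjump_deriv u) hg.integrableOn_hankelJump hf.integrableOn_hankelJump)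
  rw [intervalIntegral.integral_mul_const] at harc
  rw [hankelIntegral, hjump, mul_comm I, harc, hankelJump]
  ring

end Contour

section ReciprocalGamma

lemma integral_comp_exp {E : Type*} [NormedAddCommGroup E] [NormedSpace ℝ E] (g : ℝ → E) :
    ∫ u, Real.exp u • g (Real.exp u) = ∫ y in Ioi 0, g y := by
  rw [← Real.range_exp, ← image_univ, integral_image_eq_integral_abs_deriv_smul .univ
    (fun u _ => (Real.hasDerivAt_exp u).hasDerivWithinAt) Real.exp_injective.injOn]
  simp only [Real.abs_exp, setIntegral_univ]

lemma integrable_comp_exp {E : Type*} [NormedAddCommGroup E] [NormedSpace ℝ E] (g : ℝ → E) :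
    Integrable (fun u => Real.exp u • g (Real.exp u)) ↔ IntegrableOn g (Ioi 0) := by
  rw [← Real.range_exp, ← image_univ, integrableOn_image_iff_integrableOn_abs_deriv_smul .univ
    (fun u _ => (Real.hasDerivAt_exp u).hasDerivWithinAt) Real.exp_injective.injOn]
  simp only [Real.abs_exp, integrableOn_univ]

lemma exp_smul_gammaIntegrand_exp (s : ℂ) (u : ℝ) :
    Real.exp u • ((Real.exp (-Real.exp u) : ℂ) * (Real.exp u : ℂ) ^ (s - 1)) =
      exp (-exp u + s * u) := by
  have hlog : log (exp u) = u := by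
    rw [← ofReal_exp, ← ofReal_log (Real.exp_pos u).le, Real.log_exp]
  rw [real_smul, cpow_def_of_ne_zero (by simp [exp_ne_zero])]
  simp only [ofReal_exp, ofReal_neg, hlog, ← exp_add]
  ring_nf

lemma integrable_exp_neg_exp_add_mul {s : ℂ} (hs : 0 < s.re) :
    Integrable fun u : ℝ => exp (-exp u + s * u) := by
  simpa only [exp_smul_gammaIntegrand_exp] using
    (integrable_comp_exp _).2 (GammaIntegral_convergent hs)

lemma integral_exp_neg_exp_add_mul {s : ℂ} (hs : 0 < s.re) :
    ∫ u : ℝ, exp (-exp u + s * u) = Complex.Gamma s := by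
  rw [Complex.Gamma_eq_integral hs, GammaIntegral, ← integral_comp_exp]
  simp only [exp_smul_gammaIntegrand_exp]

lemma integrableOn_Ioi_exp_neg_exp_add_mul (s : ℂ) (c : ℝ) :
    IntegrableOn (fun u : ℝ => exp (-exp u + s * u)) (Ioi c) := by
  set t : ℝ := |s.re| + 1
  have ht : Integrable fun u : ℝ => exp (-exp u + t * u) :=
    integrable_exp_neg_exp_add_mul (by rw [ofReal_re]; positivity)
  refine Integrable.mono' (ht.integrableOn.norm.const_mul (Real.exp ((s.re - t) * c)))
    (by fun_prop : Continuous _).aestronglyMeasurable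
    (ae_restrict_of_forall_mem measurableSet_Ioi fun u (hu : c < u) => ?_)
  have hst : s.re < t := (le_abs_self _).trans_lt (lt_add_one _)
  rw [norm_exp, norm_exp, ← Real.exp_add, Real.exp_le_exp]
  simp only [add_re, re_mul_ofReal, ofReal_re]
  nlinarith

/-- The integrand `e^z z^{-s} dz` of Hankel's formula for `1 / Γ(s)` in the coordinate `z = e^w`;
the summand `w` of the exponent comes from `dz = e^w dw`. -/
def hankelKernel (s w : ℂ) : ℂ := exp (exp w + (1 - s) * w)

lemma differentiable_hankelKernel (s : ℂ) : Differentiable ℂ (hankelKernel s) := by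
  unfold hankelKernel; fun_prop

lemma hankelKernel_add (s t w : ℂ) :
    hankelKernel (s + t) w = exp (-(t * w)) * hankelKernel s w := by
  rw [hankelKernel, hankelKernel, ← exp_add]; ring_nf

lemma hankelKernel_upper_edge (s : ℂ) (u : ℝ) :
    hankelKernel s (u + π * I) = -exp (-(π * s * I)) * exp (-exp u + (1 - s) * u) := by
  have hexp : exp (u + π * I) = -exp u := by rw [exp_add, exp_pi_mul_I, mul_neg_one]
  have hlin : -exp u + (1 - s) * (u + π * I) =
      π * I + (-(π * s * I) + (-exp u + (1 - s) * u)) := by ring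
  rw [hankelKernel, hexp, hlin, exp_add, exp_add, exp_pi_mul_I, neg_one_mul, neg_mul]

lemma hankelKernel_lower_edge (s : ℂ) (u : ℝ) :
    hankelKernel s (u - π * I) = -exp (π * s * I) * exp (-exp u + (1 - s) * u) := by
  have hexp : exp (u - π * I) = -exp u := by rw [exp_sub, exp_pi_mul_I, div_neg, div_one]
  have hlin : -exp u + (1 - s) * (u - π * I) =
      -π * I + (π * s * I + (-exp u + (1 - s) * u)) := by ring
  rw [hankelKernel, hexp, hlin, exp_add, exp_add, neg_mul, exp_neg_pi_mul_I, neg_one_mul, neg_mul]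

lemma hankelJump_hankelKernel (s : ℂ) (u : ℝ) :
    hankelJump (hankelKernel s) u = 2 * I * sin (π * s) * exp (-exp u + (1 - s) * u) := by
  rw [hankelJump, hankelKernel_upper_edge, hankelKernel_lower_edge, sin, neg_mul (π * s : ℂ)]
  linear_combination (exp (π * s * I) - exp (-(π * s * I))) * exp (-exp u + (1 - s) * u) * I_sq

lemma hankelIntegrable_hankelKernel (s : ℂ) (c : ℝ) : HankelIntegrable c (hankelKernel s) where
  arc := ((differentiable_hankelKernel s).continuous.comp
    (by fun_prop : Continuous fun θ : ℝ => (c + θ * I : ℂ))).intervalIntegrable _ _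
  upper := by
    simp only [hankelKernel_upper_edge]
    exact (integrableOn_Ioi_exp_neg_exp_add_mul (1 - s) c).const_mul _
  lower := by
    simp only [hankelKernel_lower_edge]
    exact (integrableOn_Ioi_exp_neg_exp_add_mul (1 - s) c).const_mul _

lemma tendsto_integral_arc_hankelKernel_atBot {s : ℂ} (hs : s.re < 1) :
    Tendsto (fun c : ℝ => ∫ θ in (-π)..π, hankelKernel s (c + θ * I)) atBot (𝓝 0) := by
  have hexp : Tendsto (fun c : ℝ => Real.exp (1 + |s.im| * π) * Real.exp ((1 - s.re) * c) *
      |π - -π|) atBot (𝓝 0) := by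
    have := Real.tendsto_exp_atBot.comp (tendsto_id.const_mul_atBot (sub_pos.2 hs))
    simpa using (this.const_mul (Real.exp (1 + |s.im| * π))).mul_const |π - -π|
  refine squeeze_zero_norm' ?_ hexp
  filter_upwards [eventually_le_atBot 0] with c hc
  refine intervalIntegral.norm_integral_le_of_norm_le_const fun θ hθ => ?_
  have hθ' : |θ| ≤ π := by simpa [hankelStrip] using arc_mem_hankelStrip c (uIoc_subset_uIcc hθ)
  have hexp_re : (exp (c + θ * I)).re ≤ 1 := (re_le_norm _).trans (by simpa [norm_exp] using hc)
  have him : s.im * θ ≤ |s.im| * π :=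
    (le_abs_self _).trans ((abs_mul _ _).trans_le (by gcongr))
  have hre : ((1 - s) * (c + θ * I)).re = (1 - s.re) * c + s.im * θ := by simp
  rw [hankelKernel, norm_exp, ← Real.exp_add, Real.exp_le_exp, add_re, hre]
  linarith

-- As `c → -∞` the contour collapses onto the cut, leaving the Euler integral for `Γ(1 - s)`.
lemma hankelIntegral_hankelKernel_of_re_lt_one {s : ℂ} (hs : s.re < 1) (c : ℝ) :
    hankelIntegral c (hankelKernel s) = (Complex.Gamma s)⁻¹ := by
  have hs' : 0 < (1 - s).re := by simpa using hs
  have hjump : hankelJump (hankelKernel s) =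
      fun u : ℝ => 2 * I * sin (π * s) * exp (-exp u + (1 - s) * u) :=
    funext (hankelJump_hankelKernel s)
  have hlim : Tendsto (fun d => hankelIntegral d (hankelKernel s)) atBot
      (𝓝 ((2 * π * I)⁻¹ * (I * 0 + ∫ u, hankelJump (hankelKernel s) u))) := by
    refine (((tendsto_integral_arc_hankelKernel_atBot hs).const_mul I).add ?_).const_mul _
    refine (aecover_Ioi tendsto_id).integral_tendsto_of_countably_generated ?_
    exact hjump ▸ (integrable_exp_neg_exp_add_mul hs').const_mul _
  have hconst : Tendsto (fun d => hankelIntegral d (hankelKernel s)) atBot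
      (𝓝 (hankelIntegral c (hankelKernel s))) :=
    tendsto_const_nhds.congr' <| (eventually_le_atBot c).mono fun d hd =>
      (hankelIntegral_eq_of_le (differentiable_hankelKernel s).differentiableOn
        (hankelIntegrable_hankelKernel s d) hd).symm
  have hreflect : Complex.Gamma s = π / sin (π * s) / Complex.Gamma (1 - s) :=
    eq_div_of_mul_eq (Complex.Gamma_ne_zero_of_re_pos hs') (Complex.Gamma_mul_Gamma_one_sub s)
  rw [tendsto_nhds_unique hconst hlim, hjump, integral_const_mul,
    integral_exp_neg_exp_add_mul hs', hreflect, inv_div, div_div_eq_mul_div]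
  field_simp
  ring

lemma hankelIntegral_hankelKernel_one (c : ℝ) : hankelIntegral c (hankelKernel 1) = 1 := by
  have hmean : Real.circleAverage exp 0 (Real.exp c) = 1 := by
    rw [differentiable_exp.diffContOnCl.circleAverage, exp_zero]
  have harc : ∫ θ in (-π)..π, hankelKernel 1 (c + θ * I) = 2 * π := by
    rw [Real.circleAverage_eq_integral_add (-π),
      intervalIntegral.integral_comp_add_right fun θ => exp (circleMap 0 (Real.exp c) θ),
      show 0 + -π = -π by ring, show 2 * π + -π = π by ring, real_smul] at hmean
    simp only [hankelKernel, circleMap, exp_add, ofReal_exp, zero_add, sub_self, zero_mul,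
      exp_zero, mul_one] at hmean ⊢
    push_cast at hmean
    field_simp at hmean
    exact hmean
  have hjump : hankelJump (hankelKernel 1) = 0 :=
    funext fun u => by simp [hankelJump_hankelKernel]
  rw [hankelIntegral, harc, hjump]
  simp only [Pi.zero_apply, integral_zero, add_zero]
  field_simp

lemma hankelIntegral_hankelKernel_sub_one (s : ℂ) (c : ℝ) :
    hankelIntegral c (hankelKernel (s - 1)) = (s - 1) * hankelIntegral c (hankelKernel s) := by
  have hderiv (w : ℂ) :
      HasDerivAt (hankelKernel s) (hankelKernel (s - 1) w + (1 - s) * hankelKernel s w) w := by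
    have hexponent := (hasDerivAt_exp w).add ((hasDerivAt_id w).const_mul (1 - s))
    refine hexponent.cexp.congr_deriv ?_
    rw [sub_eq_add_neg s 1, hankelKernel_add, hankelKernel]
    simp only [id_eq, Pi.add_apply, mul_one, neg_mul, one_mul, neg_neg]
    ring
  have hzero := hankelIntegral_eq_zero_of_hasDerivAt (fun w _ => hderiv w)
    (hankelIntegrable_hankelKernel s c) ((hankelIntegrable_hankelKernel (s - 1) c).add
      ((hankelIntegrable_hankelKernel s c).const_mul (1 - s)))
  rw [hankelIntegral_add (hankelIntegrable_hankelKernel (s - 1) c)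
    ((hankelIntegrable_hankelKernel s c).const_mul (1 - s)), hankelIntegral_const_mul] at hzero
  linear_combination hzero

theorem hankelIntegral_hankelKernel (s : ℂ) (c : ℝ) :
    hankelIntegral c (hankelKernel s) = (Complex.Gamma s)⁻¹ := by
  obtain ⟨n, hn⟩ := exists_nat_gt s.re
  induction n generalizing s with
  | zero => exact hankelIntegral_hankelKernel_of_re_lt_one (hn.trans (by simp)) c
  | succ n ih =>
    rcases eq_or_ne s 1 with rfl | hs
    · rw [hankelIntegral_hankelKernel_one, Complex.Gamma_one, inv_one]
    · have hshift := ih (s - 1) (by simpa [sub_lt_iff_lt_add] using hn)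
      rw [hankelIntegral_hankelKernel_sub_one, one_div_Gamma_eq_self_mul_one_div_Gamma_add_one,
        sub_add_cancel] at hshift
      exact mul_left_cancel₀ (sub_ne_zero.2 hs) hshift

end ReciprocalGamma

section MittagLeffler

/-- The two-parametric Mittag-Leffler function `E_{α,β}(z)`. The terms at the poles of `Γ` vanish,
since `Γ` takes the value `0` there. -/
def mittagLeffler (α : ℝ) (β z : ℂ) : ℂ := ∑' k : ℕ, z ^ k / Complex.Gamma (α * k + β)

/-- The integrand `e^ζ ζ^{α-β} / (ζ^α - z) dζ` of the Hankel representation of `E_{α,β}(z)`, in the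
coordinate `ζ = e^w`. -/
def mittagLefflerKernel (α : ℝ) (β z w : ℂ) : ℂ := hankelKernel (β - α) w / (exp (α * w) - z)

variable {α : ℝ} {β z w : ℂ} {c : ℝ}

lemma pow_mul_hankelKernel (α : ℝ) (β z w : ℂ) (k : ℕ) :
    z ^ k * hankelKernel (α * k + β) w = (z * exp (-(α * w))) ^ k * hankelKernel β w := by
  rw [add_comm, hankelKernel_add, mul_pow, ← exp_nat_mul]
  ring_nf

lemma norm_mul_exp_neg_mul (α : ℝ) (z w : ℂ) :
    ‖z * exp (-(α * w))‖ = ‖z‖ * Real.exp (-(α * w.re)) := by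
  rw [norm_mul, norm_exp, neg_re, re_ofReal_mul]

lemma mul_exp_neg_lt_one_iff {r t : ℝ} : r * Real.exp (-t) < 1 ↔ r < Real.exp t := by
  rw [Real.exp_neg, ← div_eq_mul_inv, div_lt_one (Real.exp_pos t)]

lemma hasSum_mittagLefflerKernel (hz : ‖z‖ < Real.exp (α * w.re)) :
    HasSum (fun k : ℕ => z ^ k * hankelKernel (α * k + β) w) (mittagLefflerKernel α β z w) := by
  have hratio : ‖z * exp (-(α * w))‖ < 1 := by
    rwa [norm_mul_exp_neg_mul, mul_exp_neg_lt_one_iff]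
  have hkernel : mittagLefflerKernel α β z w =
      (1 - z * exp (-(α * w)))⁻¹ * hankelKernel β w := by
    have hden : exp (α * w) - z = exp (α * w) * (1 - z * exp (-(α * w))) := by
      rw [exp_neg]; field_simp [exp_ne_zero]
    rw [mittagLefflerKernel, hden, sub_eq_add_neg, hankelKernel_add, neg_mul, neg_neg,
      mul_div_mul_left _ _ (exp_ne_zero _), div_eq_inv_mul]
  simp only [pow_mul_hankelKernel, hkernel]
  exact (hasSum_geometric_of_norm_lt_one hratio).mul_right _

lemma hasSum_mittagLeffler_hankelIntegral (β : ℂ) (hα : 0 ≤ α) (hz : ‖z‖ < Real.exp (α * c)) :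
    HasSum (fun k : ℕ => z ^ k / Complex.Gamma (α * k + β))
      (hankelIntegral c (mittagLefflerKernel α β z)) := by
  have hratio : ‖z‖ * Real.exp (-(α * c)) < 1 := mul_exp_neg_lt_one_iff.2 hz
  have hsum := hasSum_hankelIntegral (h := hankelKernel β) (c := c)
    (F := fun k w => z ^ k * hankelKernel (α * k + β) w) (g := mittagLefflerKernel α β z)
    (fun k => (hankelIntegrable_hankelKernel (α * k + β) c).const_mul (z ^ k))
    (hankelIntegrable_hankelKernel β c) (summable_geometric_of_lt_one (by positivity) hratio)
    (fun k w _ hw => ?_)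
    (fun w _ hw => hasSum_mittagLefflerKernel (hz.trans_le (by gcongr)))
  · simpa only [hankelIntegral_const_mul, hankelIntegral_hankelKernel, ← div_eq_mul_inv] using hsum
  · rw [pow_mul_hankelKernel, norm_mul, norm_pow, norm_mul_exp_neg_mul]
    gcongr

lemma mittagLeffler_eq_hankelIntegral (β : ℂ) (hα : 0 ≤ α) (hz : ‖z‖ < Real.exp (α * c)) :
    mittagLeffler α β z = hankelIntegral c (mittagLefflerKernel α β z) :=
  (hasSum_mittagLeffler_hankelIntegral β hα hz).tsum_eq

lemma exists_norm_lt_exp_mul (hα : 0 < α) (z : ℂ) : ∃ c, 0 ≤ c ∧ ‖z‖ < Real.exp (α * c) := by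
  have h : Tendsto (fun c => Real.exp (α * c)) atTop atTop :=
    Real.tendsto_exp_atTop.comp (tendsto_id.const_mul_atTop hα)
  exact ((eventually_ge_atTop 0).and (h.eventually_gt_atTop ‖z‖)).exists

lemma mittagLeffler_eq_inv_Gamma_add (hα : 0 < α) (β z : ℂ) :
    mittagLeffler α β z = (Complex.Gamma β)⁻¹ + z * mittagLeffler α (β + α) z := by
  obtain ⟨c, -, hc⟩ := exists_norm_lt_exp_mul hα z
  rw [mittagLeffler, (hasSum_mittagLeffler_hankelIntegral β hα.le hc).summable.tsum_eq_zero_add,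
    mittagLeffler, ← tsum_mul_left]
  congr 1
  · simp
  · refine tsum_congr fun k => ?_
    rw [pow_succ', mul_div_assoc]
    congr 3
    push_cast
    ring

lemma mul_sin_le_norm_exp_add {a x : ℝ} {v : ℂ} (hx : 0 ≤ x) (ha : a ≤ π) (hv : |v.im| ≤ a) :
    x * Real.sin a ≤ ‖exp v + x‖ := by
  have hcos : Real.cos a ≤ Real.cos v.im := by
    rw [← Real.cos_abs v.im]
    exact Real.cos_le_cos_of_nonneg_of_le_pi (abs_nonneg _) ha hv
  have hcross : 0 ≤ Real.exp v.re * x * (Real.cos v.im - Real.cos a) :=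
    mul_nonneg (mul_nonneg (Real.exp_pos _).le hx) (sub_nonneg.2 hcos)
  have hnorm : ‖exp v + x‖ ^ 2 = (x * Real.sin a) ^ 2 + (Real.exp v.re + x * Real.cos a) ^ 2 +
      2 * (Real.exp v.re * x * (Real.cos v.im - Real.cos a)) := by
    rw [← normSq_eq_norm_sq, normSq_apply, add_re, add_im, exp_re, exp_im, ofReal_re, ofReal_im]
    linear_combination Real.exp v.re ^ 2 * Real.sin_sq_add_cos_sq v.im -
      x ^ 2 * Real.sin_sq_add_cos_sq a
  refine (abs_le_of_sq_le_sq' ?_ (norm_nonneg _)).2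
  rw [hnorm]
  linarith [sq_nonneg (Real.exp v.re + x * Real.cos a)]

lemma mul_sin_le_norm_exp_mul_add {x : ℝ} (hα0 : 0 ≤ α) (hα1 : α ≤ 1) (hx : 0 ≤ x)
    (hw : w ∈ hankelStrip) : x * Real.sin (π * α) ≤ ‖exp (α * w) - (-x : ℂ)‖ := by
  rw [sub_neg_eq_add]
  refine mul_sin_le_norm_exp_add hx (mul_le_of_le_one_right Real.pi_pos.le hα1) ?_
  rw [im_ofReal_mul, abs_mul, abs_of_nonneg hα0, mul_comm]
  exact mul_le_mul_of_nonneg_right hw hα0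

lemma sin_pi_mul_pos (hα0 : 0 < α) (hα1 : α < 1) : 0 < Real.sin (π * α) :=
  Real.sin_pos_of_pos_of_lt_pi (by positivity) (mul_lt_of_lt_one_right Real.pi_pos hα1)

lemma differentiableOn_mittagLefflerKernel {x : ℝ} (hα0 : 0 < α) (hα1 : α < 1) (hx : 0 < x)
    (β : ℂ) : DifferentiableOn ℂ (mittagLefflerKernel α β (-x)) hankelStrip := by
  refine (differentiable_hankelKernel _).differentiableOn.div
    (by fun_prop) fun w hw => norm_pos_iff.1 ?_
  exact (mul_pos hx (sin_pi_mul_pos hα0 hα1)).trans_le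
    (mul_sin_le_norm_exp_mul_add hα0.le hα1.le hx.le hw)

lemma norm_mittagLefflerKernel_le {x : ℝ} (hα0 : 0 < α) (hα1 : α < 1) (hx : 0 < x) (β : ℂ)
    (hw : w ∈ hankelStrip) : ‖mittagLefflerKernel α β (-x) w‖ ≤
      (x * Real.sin (π * α))⁻¹ * ‖hankelKernel (β - α) w‖ := by
  have hsin := sin_pi_mul_pos hα0 hα1
  rw [mittagLefflerKernel, norm_div, div_eq_inv_mul]
  gcongr
  exact mul_sin_le_norm_exp_mul_add hα0.le hα1.le hx.le hw

lemma mittagLeffler_neg_eq_hankelIntegral_zero {x : ℝ} (hα0 : 0 < α) (hα1 : α < 1) (hx : 0 < x)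
    (β : ℂ) : mittagLeffler α β (-x) = hankelIntegral 0 (mittagLefflerKernel α β (-x)) := by
  have hdiff := differentiableOn_mittagLefflerKernel hα0 hα1 hx β
  obtain ⟨c, hc, hxc⟩ := exists_norm_lt_exp_mul hα0 (-x : ℂ)
  rw [mittagLeffler_eq_hankelIntegral β hα0.le hxc]
  refine (hankelIntegral_eq_of_le hdiff ?_ hc).symm
  exact (hankelIntegrable_hankelKernel (β - α) 0).mono hdiff.continuousOn
    fun w hw => norm_mittagLefflerKernel_le hα0 hα1 hx β hw

lemma mittagLeffler_neg_isBigO_inv (hα0 : 0 < α) (hα1 : α < 1) (β : ℂ) :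
    (fun x : ℝ => mittagLeffler α β (-x)) =O[atTop] fun x => x⁻¹ := by
  obtain ⟨B, hB⟩ := exists_norm_hankelIntegral_le (hankelIntegrable_hankelKernel (β - α) 0)
  refine .of_bound ((Real.sin (π * α))⁻¹ * B) ?_
  filter_upwards [eventually_gt_atTop 0] with x hx
  calc ‖mittagLeffler α β (-x)‖
      = ‖hankelIntegral 0 (mittagLefflerKernel α β (-x))‖ := by
        rw [mittagLeffler_neg_eq_hankelIntegral_zero hα0 hα1 hx]
    _ ≤ (x * Real.sin (π * α))⁻¹ * B :=
        hB _ _ fun w hw => norm_mittagLefflerKernel_le hα0 hα1 hx β hw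
    _ = (Real.sin (π * α))⁻¹ * B * ‖x⁻¹‖ := by
        rw [Real.norm_of_nonneg (by positivity), mul_inv]; ring

theorem mittagLeffler_neg_sub_sum_isBigO (hα0 : 0 < α) (hα1 : α < 1) (β : ℂ) (N : ℕ) :
    (fun x : ℝ => mittagLeffler α β (-x) -
      ∑ k ∈ Finset.range N, (-1) ^ k * (x : ℂ)⁻¹ ^ (k + 1) / Complex.Gamma (β - α * (k + 1)))
      =O[atTop] fun x => x⁻¹ ^ (N + 1) := by
  induction N generalizing β with
  | zero => simpa using mittagLeffler_neg_isBigO_inv hα0 hα1 β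
  | succ N ih =>
    have hinv : (fun x : ℝ => -(x : ℂ)⁻¹) =O[atTop] fun x => x⁻¹ :=
      isBigO_of_le _ fun x => by simp
    refine (hinv.mul (ih (β - α))).congr' ?_ (.of_forall fun x => (pow_succ' _ _).symm)
    filter_upwards [eventually_ne_atTop 0] with x hx
    have hrec := mittagLeffler_eq_inv_Gamma_add hα0 (β - α) (-x)
    rw [sub_add_cancel] at hrec
    have hxc : (x : ℂ) ≠ 0 := ofReal_ne_zero.2 hx
    have hE : mittagLeffler α β (-x) =
        (x : ℂ)⁻¹ / Complex.Gamma (β - α) - (x : ℂ)⁻¹ * mittagLeffler α (β - α) (-x) := by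
      rw [hrec]; field_simp; ring
    have hterm (k : ℕ) : (-1) ^ (k + 1) * (x : ℂ)⁻¹ ^ (k + 1 + 1) /
          Complex.Gamma (β - α * ((k + 1 : ℕ) + 1)) =
        -(x : ℂ)⁻¹ * ((-1) ^ k * (x : ℂ)⁻¹ ^ (k + 1) / Complex.Gamma (β - α - α * (k + 1))) := by
      rw [show β - α * ((k + 1 : ℕ) + 1) = β - α - α * (k + 1) by push_cast; ring]
      ring
    rw [Finset.sum_range_succ', hE]
    simp only [hterm, ← Finset.mul_sum]
    simp only [inv_pow, neg_mul, pow_zero, zero_add, pow_one, one_mul, CharP.cast_eq_zero, mul_one]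
    ring

end MittagLeffler

section PadeApproximant

theorem tsum_neg_pow_div_Gamma_sub_sum_isBigO {α : ℝ} (hα0 : 0 < α) (hα1 : α < 1) (β : ℝ)
    (N : ℕ) :
    (fun x : ℝ => (∑' k : ℕ, (-x) ^ k / Real.Gamma (α * k + β)) -
      ∑ k ∈ Finset.range N, (-1) ^ k * x⁻¹ ^ (k + 1) / Real.Gamma (β - α * (k + 1)))
      =O[atTop] fun x => x⁻¹ ^ (N + 1) := by
  have hcomplex := mittagLeffler_neg_sub_sum_isBigO hα0 hα1 β N
  refine (hcomplex.norm_left.congr_left fun x => ?_).of_norm_left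
  rw [← norm_real, mittagLeffler]
  push_cast [← Complex.Gamma_ofReal]
  rfl

lemma inv_Gamma_neg (s : ℝ) : (Real.Gamma (-s))⁻¹ = -s / Real.Gamma (1 - s) := by
  rcases eq_or_ne s 0 with rfl | hs
  · simp
  · rw [← neg_add_eq_sub, Real.Gamma_add_one (neg_ne_zero.2 hs),
      div_mul_cancel_left₀ (neg_ne_zero.2 hs)]

lemma tsum_neg_pow_div_Gamma_diagonal_isBigO {α : ℝ} (hα0 : 0 < α) (hα1 : α < 1) :
    (fun x : ℝ => (∑' k : ℕ, (-x) ^ k / Real.Gamma (α * k + α)) -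
      (α / Real.Gamma (1 - α) * x⁻¹ ^ 2 - 2 * α / Real.Gamma (1 - 2 * α) * x⁻¹ ^ 3))
      =O[atTop] fun x => x⁻¹ ^ 4 := by
  refine (tsum_neg_pow_div_Gamma_sub_sum_isBigO hα0 hα1 α 3).congr_left fun x => ?_
  have h0 : α - α * ((0 : ℕ) + 1) = 0 := by simp
  have h1 : α - α * ((1 : ℕ) + 1) = -α := by push_cast; ring
  have h2 : α - α * ((2 : ℕ) + 1) = -(2 * α) := by push_cast; ring
  simp only [Finset.sum_range_succ, Finset.sum_range_zero, h0, h1, h2, Real.Gamma_zero,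
    div_eq_mul_inv _ (Real.Gamma (-_)), inv_Gamma_neg]
  ring

lemma inv_quadratic_sub_isBigO_sq {K : Type*} [NormedField K] (a b : K) {c : K} (hc : c ≠ 0) :
    (fun t => (c + b * t + a * t ^ 2)⁻¹ - (c⁻¹ - b / c ^ 2 * t)) =O[𝓝 0] fun t => t ^ 2 := by
  have hden : ContinuousAt (fun t : K => c + b * t + a * t ^ 2) 0 := by fun_prop
  have hden0 : c + b * 0 + a * 0 ^ 2 ≠ 0 := by simpa using hc
  have hquot : ContinuousAt
      (fun t => (b ^ 2 - a * c + a * b * t) / (c ^ 2 * (c + b * t + a * t ^ 2))) 0 :=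
    ContinuousAt.div (by fun_prop) (by fun_prop) (mul_ne_zero (pow_ne_zero 2 hc) hden0)
  refine (((isBigO_refl (· ^ 2) (𝓝 (0 : K))).mul (hquot.isBigO_one K)).congr' ?_
    (.of_forall fun t => mul_one _))
  filter_upwards [hden.eventually_ne hden0] with t ht
  set q := c + b * t + a * t ^ 2 with hq
  field_simp
  rw [hq]
  ring

-- The substitution `t = x⁻¹` turns the expansion at infinity into one at `0`.
lemma div_quadratic_sub_isBigO_inv_pow_four (m a b : ℝ) {c : ℝ} (hc : c ≠ 0) :
    (fun x : ℝ => m / (a + b * x + c * x ^ 2) - (m / c * x⁻¹ ^ 2 - m * b / c ^ 2 * x⁻¹ ^ 3))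
      =O[atTop] fun x => x⁻¹ ^ 4 := by
  have hinv := (inv_quadratic_sub_isBigO_sq a b hc).comp_tendsto tendsto_inv_atTop_zero
  have hscale : (fun x : ℝ => m * x⁻¹ ^ 2) =O[atTop] fun x => x⁻¹ ^ 2 :=
    isBigO_const_mul_self m _ _
  refine (hscale.mul hinv).congr' ?_ (.of_forall fun x => by simp only [Function.comp]; ring)
  filter_upwards [eventually_ne_atTop 0] with x hx
  have hden : a + b * x + c * x ^ 2 = x ^ 2 * (c + b * x⁻¹ + a * x⁻¹ ^ 2) := by
    field_simp; ring
  rw [hden, Function.comp, div_mul_eq_div_div, div_eq_mul_inv (m / x ^ 2)]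
  ring

end PadeApproximant

end

/-- The second-order global Padé approximant of Zeng and Chen for `E_{α,α}(-x)`
has error `O(x^{-4})` as `x → ∞`. -/
theorem zengChen_second_order_error_at_infinity
    (α : ℝ) (hα0 : 0 < α) (hα1 : α < 1) :
    ∃ C > (0 : ℝ), ∃ R > (0 : ℝ), ∀ x : ℝ, R < x →
      |(∑' k : ℕ, (-x) ^ k / Real.Gamma (α * k + α))
        - α / (Real.Gamma (1 + α)
            + (2 * Real.Gamma (1 - α) ^ 2 / Real.Gamma (1 - 2 * α)) * x
            + Real.Gamma (1 - α) * x ^ 2)|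
      ≤ C * x ^ (-(4 : ℤ)) := by
  have hΓ : Real.Gamma (1 - α) ≠ 0 := (Real.Gamma_pos_of_pos (sub_pos.2 hα1)).ne'
  have hcoeff : α * (2 * Real.Gamma (1 - α) ^ 2 / Real.Gamma (1 - 2 * α)) /
      Real.Gamma (1 - α) ^ 2 = 2 * α / Real.Gamma (1 - 2 * α) := by
    field_simp
  have hpade := div_quadratic_sub_isBigO_inv_pow_four α (Real.Gamma (1 + α))
    (2 * Real.Gamma (1 - α) ^ 2 / Real.Gamma (1 - 2 * α)) hΓ
  rw [hcoeff] at hpade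
  have herror := (tsum_neg_pow_div_Gamma_diagonal_isBigO hα0 hα1).sub hpade
  simp only [sub_sub_sub_cancel_right] at herror
  obtain ⟨C, hC, hbound⟩ := herror.exists_pos
  obtain ⟨R, hR⟩ := Filter.eventually_atTop.1 hbound.bound
  refine ⟨C, hC, max R 1, by positivity, fun x hx => ?_⟩
  have hx0 : 0 < x := one_pos.trans ((le_max_right R 1).trans_lt hx)
  simpa [abs_of_pos hx0, zpow_neg] using hR x ((le_max_left R 1).trans hx.le)
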